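/- Let ℓ > 1 and let B_ℓ be the graph obtained as follows: take ℓ disjoint copies of K₅ minus an edge, with v_i, w_i the two nonadjacent vertices of the i-th copy; add two new vertices v and w, joining v to all v_i and w to all w_i. Then the Euler genus of B_ℓ is at least ℓ/2. -/

import Mathlib

def FPF {F : Type*} (π : Equiv.Perm F) : Prop := π * π = 1 ∧ ∀ x, π x ≠ x

def orbSet {F : Type*} (S : Set (Equiv.Perm F)) (x : F) : Set F :=
  MulAction.orbit (Subgroup.closure S) x

noncomputable def orbCount {F : Type*} (S : Set (Equiv.Perm F)) : ℕ :=
  Nat.card (MulAction.orbitRel.Quotient (Subgroup.closure S) F)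

noncomputable def genus {F : Type*} (θ σ' φ' : Equiv.Perm F) : ℤ :=
  (orbCount {θ, σ'} : ℤ) - orbCount {σ', φ'} - orbCount {θ, φ'} + 2 * orbCount {θ, σ', φ'}

def IsGraphEmb {F : Type*} (θ σ' φ' : Equiv.Perm F) : Prop :=
  FPF θ ∧ FPF σ' ∧ FPF φ' ∧ ∀ x : F, Nat.card (orbSet {θ, σ'} x) = 4

def IsEdgeDeletion {F : Type*} (σ' φ' : Equiv.Perm F) (e : Set F)
    (θ₀ σ₀ φ₀ : Equiv.Perm {f : F // f ∉ e}) (θ : Equiv.Perm F) : Prop :=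
  (∀ a : {f : F // f ∉ e}, (θ₀ a : F) = θ a ∧ (σ₀ a : F) = σ' a) ∧
  (∀ a : {f : F // f ∉ e}, ∃ m : ℕ,
     ((φ' * σ') ^ m) (φ' a) ∉ e ∧ (∀ j < m, ((φ' * σ') ^ j) (φ' a) ∈ e) ∧
     (φ₀ a : F) = ((φ' * σ') ^ m) (φ' a))

/-- The combinatorial embedding `(θ, σ, φ)` with flag set `Fl` realizes the simple
graph `G` via the assignment `p` of flags to graph vertices. -/
def Realizes {Fl V : Type*} (θ σ' φ' : Equiv.Perm Fl) (G : SimpleGraph V) (p : Fl → V) : Prop :=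
  (∀ f, p (σ' f) = p f) ∧ (∀ f, p (φ' f) = p f) ∧
  (∀ f, G.Adj (p f) (p (θ f))) ∧
  (∀ f f', p f = p f' → f' ∈ orbSet {σ', φ'} f) ∧
  (∀ u v, G.Adj u v → ∃ f, p f = u ∧ p (θ f) = v) ∧
  (∀ f f', p f = p f' → p (θ f) = p (θ f') → f' ∈ orbSet {θ, σ'} f)

/-- The graph `B_ℓ`: `ℓ` disjoint copies of `K₅` minus an edge (the missing edge of
copy `i` joining `(i,0)` and `(i,1)`), an apex `inr 0 = v` adjacent to every `(i,0)`,
and an apex `inr 1 = w` adjacent to every `(i,1)`. -/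
def Bgraph (ℓ : ℕ) : SimpleGraph ((Fin ℓ × Fin 5) ⊕ Fin 2) :=
  SimpleGraph.fromRel (fun a b =>
    match a, b with
    | .inl (i, x), .inl (j, y) => i = j ∧ x ≠ y ∧ ¬(x = 0 ∧ y = 1) ∧ ¬(x = 1 ∧ y = 0)
    | .inl (_, x), .inr z => (z = 0 ∧ x = 0) ∨ (z = 1 ∧ x = 1)
    | .inr _, .inl _ => False
    | .inr _, .inr _ => False)

/-!
Counting orbits of flags, `B_ℓ` has `E = 11ℓ` edges and its embedding has `V ≤ 5ℓ + 2` vertices, so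
`E - V - F + 2C ≥ ℓ` as soon as there are `F ≤ 5ℓ` faces.

A face that leaves a copy of `K₅⁻` reaches an apex, where it cannot turn back, and so goes on to
another copy. It crosses the cut of each copy an even number of times, hence at least four times
in all counting every copy it meets; as each of the `ℓ` cuts is crossed by only four flags, at most
`ℓ` faces leave a copy. Of the `40` flags at a copy, these faces use at least `3 · 4 = 12`, because
the two vertices joined to the apices are not adjacent. A face within the copy has at least three
corners, that is `6` flags, so the remaining `28` flags allow at most four of them.
-/

section Counting

variable {α β : Type*} [Finite α]

theorem mul_ncard_le_ncard_of_fibers (f : α → β) {s : Set α} {t : Set β} {n : ℕ}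
    (h : ∀ b ∈ t, n ≤ {a ∈ s | f a = b}.ncard) : n * t.ncard ≤ s.ncard := by
  rcases t.finite_or_infinite with ht | ht
  · lift t to Finset β using ht
    have hdisj : (t : Set β).PairwiseDisjoint fun b ↦ {a ∈ s | f a = b} :=
      fun b _ c _ hbc ↦ Set.disjoint_left.2 fun a ha ha' ↦ hbc (ha.2.symm.trans ha'.2)
    calc n * (t : Set β).ncard = t.card • n := by
          rw [Set.ncard_coe_finset, smul_eq_mul, mul_comm]
      _ ≤ ∑ b ∈ t, {a ∈ s | f a = b}.ncard := Finset.card_nsmul_le_sum _ _ _ h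
      _ = (⋃ b ∈ (t : Set β), {a ∈ s | f a = b}).ncard := by
          rw [t.finite_toSet.ncard_biUnion (fun _ _ ↦ Set.toFinite _) hdisj,
            finsum_mem_coe_finset]
      _ ≤ s.ncard := Set.ncard_le_ncard (Set.iUnion₂_subset fun _ _ ↦ Set.sep_subset _ _)
  · simp [ht.ncard]

theorem ncard_preimage_eq_mul [Finite β] (f : α → β) {t : Set β} {n : ℕ}
    (h : ∀ b ∈ t, (f ⁻¹' {b}).ncard = n) : (f ⁻¹' t).ncard = n * t.ncard := by
  have := Fintype.ofFinite t
  calc (f ⁻¹' t).ncard = (⋃ b ∈ t, f ⁻¹' {b}).ncard := by rw [Set.biUnion_preimage_singleton]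
    _ = ∑ᶠ b ∈ t, (f ⁻¹' {b}).ncard :=
        t.toFinite.ncard_biUnion (fun _ _ ↦ Set.toFinite _)
          fun b _ c _ hbc ↦ (Set.disjoint_singleton.2 hbc).preimage f
    _ = ∑ᶠ b ∈ t, n := finsum_mem_congr rfl h
    _ = n * t.ncard := by
        rw [finsum_mem_eq_finite_toFinset_sum _ t.toFinite, Finset.sum_const, smul_eq_mul,
          mul_comm, Set.ncard_eq_toFinset_card t]

end Counting

section Permutations

variable {F : Type*}

theorem FPF.involutive {π : Equiv.Perm F} (hπ : FPF π) : Function.Involutive π :=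
  Equiv.congr_fun hπ.1

theorem FPF.apply_ne {π : Equiv.Perm F} (hπ : FPF π) (x : F) : π x ≠ x :=
  hπ.2 x

theorem FPF.even_ncard {π : Equiv.Perm F} (hπ : FPF π) {A : Set F} (hA : Set.MapsTo π A A) :
    Even A.ncard := by
  rcases A.finite_or_infinite with hfin | hinf
  · have hsum : ∑ _ ∈ hfin.toFinset, (1 : ZMod 2) = 0 :=
      Finset.sum_involution (fun x _ ↦ π x) (fun _ _ ↦ by decide) (fun _ _ _ ↦ hπ.apply_ne _)
        (fun _ hx ↦ by simpa using hA (by simpa using hx)) fun _ _ ↦ hπ.involutive _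
    rw [Finset.sum_const, nsmul_eq_mul, mul_one, ← Set.ncard_eq_toFinset_card A hfin] at hsum
    exact ZMod.natCast_eq_zero_iff_even.1 hsum
  · simp [hinf.ncard]

variable {S : Set (Equiv.Perm F)}

theorem mem_orbSet_self (S : Set (Equiv.Perm F)) (x : F) : x ∈ orbSet S x :=
  MulAction.mem_orbit_self x

theorem apply_mem_orbSet {s : Equiv.Perm F} (hs : s ∈ S) {x y : F} (hy : y ∈ orbSet S x) :
    s y ∈ orbSet S x :=
  (MulAction.mem_orbit_of_mem_orbit (⟨s, Subgroup.subset_closure hs⟩ : Subgroup.closure S) hy :)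

open Pointwise in
theorem orbSet_subset {A : Set F} (hA : ∀ s ∈ S, ∀ x, s x ∈ A ↔ x ∈ A) {x : F} (hx : x ∈ A) :
    orbSet S x ⊆ A := by
  have hstab : Subgroup.closure S ≤ MulAction.stabilizer (Equiv.Perm F) A :=
    (Subgroup.closure_le _).2 fun s hs ↦ MulAction.mem_stabilizer_set.2 (hA s hs)
  rintro _ ⟨⟨t, ht⟩, rfl⟩
  exact (MulAction.mem_stabilizer_set.1 (hstab ht) x).2 hx

/-- The type of orbits of the group generated by `S`, whose cardinality is `orbCount S`. For the
pairs among the three involutions of an embedding these are its edges, vertices and faces. -/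
abbrev Orb (S : Set (Equiv.Perm F)) : Type _ :=
  MulAction.orbitRel.Quotient (Subgroup.closure S) F

/-- The orbit, as an element of `Orb S`, through a given point. -/
def toOrb (S : Set (Equiv.Perm F)) (x : F) : Orb S :=
  Quotient.mk _ x

theorem toOrb_surjective (S : Set (Equiv.Perm F)) : Function.Surjective (toOrb S) :=
  Quotient.mk_surjective

theorem toOrb_eq_iff {x y : F} : toOrb S y = toOrb S x ↔ y ∈ orbSet S x :=
  Quotient.eq (r := MulAction.orbitRel (Subgroup.closure S) F)

theorem toOrb_apply {s : Equiv.Perm F} (hs : s ∈ S) (x : F) : toOrb S (s x) = toOrb S x :=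
  toOrb_eq_iff.2 (apply_mem_orbSet hs (mem_orbSet_self S x))

theorem orbCount_pos [Finite F] [Nonempty F] (S : Set (Equiv.Perm F)) : 0 < orbCount S :=
  have : Nonempty (Orb S) := ‹Nonempty F›.map (toOrb S)
  Nat.card_pos

theorem mul_orbCount_eq_card [Finite F] {n : ℕ} (h : ∀ x, Nat.card (orbSet S x) = n) :
    n * orbCount S = Nat.card F := by
  have hfib : ∀ q ∈ Set.univ, (toOrb S ⁻¹' {q}).ncard = n := by
    intro q _
    obtain ⟨x, rfl⟩ := toOrb_surjective S q
    simpa [Set.preimage, toOrb_eq_iff] using h x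
  simpa [Set.ncard_univ, orbCount] using (ncard_preimage_eq_mul (toOrb S) hfib).symm

end Permutations

namespace Realizes

variable {F V : Type*} {θ σ φ : Equiv.Perm F} {G : SimpleGraph V} {p : F → V}

theorem map_sigma (hp : Realizes θ σ φ G p) (f : F) : p (σ f) = p f :=
  hp.1 f

theorem map_phi (hp : Realizes θ σ φ G p) (f : F) : p (φ f) = p f :=
  hp.2.1 f

theorem adj (hp : Realizes θ σ φ G p) (f : F) : G.Adj (p f) (p (θ f)) :=
  hp.2.2.1 f

theorem mem_orbSet_vertex (hp : Realizes θ σ φ G p) {f g : F} (hfg : p f = p g) :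
    g ∈ orbSet {σ, φ} f :=
  hp.2.2.2.1 f g hfg

theorem orbSet_edge_eq (hp : Realizes θ σ φ G p) (h : IsGraphEmb θ σ φ) (f : F) :
    orbSet {θ, σ} f = {f, σ f, θ f, θ (σ f)} := by
  have hf : f ∈ orbSet {θ, σ} f := mem_orbSet_self _ f
  have hσf : σ f ∈ orbSet {θ, σ} f := apply_mem_orbSet (by simp) hf
  have hsub : ({f, σ f, θ f, θ (σ f)} : Set F) ⊆ orbSet {θ, σ} f := by
    rintro x (rfl | rfl | rfl | rfl)
    exacts [hf, hσf, apply_mem_orbSet (by simp) hf, apply_mem_orbSet (by simp) hσf]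
  have hcard : ({f, σ f, θ f, θ (σ f)} : Set F).ncard = 4 := by
    have hσ : σ f ≠ f := h.2.1.apply_ne f
    have hθ : ∀ x y, p x = p y → x ≠ θ y := fun x y hxy hx ↦
      (hp.adj y).ne (hxy.symm.trans (congrArg p hx))
    refine Set.ncard_eq_four.2 ⟨f, σ f, θ f, θ (σ f), hσ.symm, hθ _ _ rfl,
      hθ _ _ (hp.map_sigma f).symm, hθ _ _ (hp.map_sigma f), hθ _ _ rfl,
      fun hθσ ↦ hσ (θ.injective hθσ).symm, rfl⟩
  have hfin : (orbSet {θ, σ} f).Finite :=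
    Set.finite_of_ncard_ne_zero (by rw [← Nat.card_coe_set_eq, h.2.2.2 f]; decide)
  exact (Set.eq_of_subset_of_ncard_le hsub (by
    rw [hcard, ← Nat.card_coe_set_eq, h.2.2.2 f]) hfin).symm

theorem map_theta_sigma (hp : Realizes θ σ φ G p) (h : IsGraphEmb θ σ φ) (f : F) :
    p (θ (σ f)) = p (θ f) := by
  have hmem : σ (θ f) ∈ orbSet {θ, σ} f :=
    apply_mem_orbSet (by simp) (apply_mem_orbSet (by simp) (mem_orbSet_self _ f))
  have hp_mem : p (σ (θ f)) = p (θ f) := hp.map_sigma (θ f)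
  rw [hp.orbSet_edge_eq h] at hmem
  rcases hmem with hx | hx | hx | hx <;> rw [hx] at hp_mem
  · exact absurd hp_mem (hp.adj f).ne
  · exact absurd ((hp.map_sigma f).symm.trans hp_mem) (hp.adj f).ne
  · exact absurd hx (h.2.1.apply_ne _)
  · exact hp_mem

/-- The directed edge of `G` along which a flag points. -/
def dart (hp : Realizes θ σ φ G p) (f : F) : G.Dart :=
  ⟨(p f, p (θ f)), hp.adj f⟩

theorem dart_eq_iff (hp : Realizes θ σ φ G p) {f g : F} :
    hp.dart g = hp.dart f ↔ p g = p f ∧ p (θ g) = p (θ f) := by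
  simp [dart, SimpleGraph.Dart.ext_iff]

theorem dart_eq_iff_eq_or_eq (hp : Realizes θ σ φ G p) (h : IsGraphEmb θ σ φ) {f g : F} :
    hp.dart g = hp.dart f ↔ g = f ∨ g = σ f := by
  rw [dart_eq_iff]
  constructor
  · rintro ⟨htail, hhead⟩
    have hmem : g ∈ orbSet {θ, σ} f := hp.2.2.2.2.2 f g htail.symm hhead.symm
    rw [hp.orbSet_edge_eq h] at hmem
    rcases hmem with hx | hx | rfl | rfl
    · exact .inl hx
    · exact .inr hx
    · exact absurd htail.symm (hp.adj f).ne
    · exact absurd (htail.symm.trans (hp.map_theta_sigma h f)) (hp.adj f).ne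
  · rintro (rfl | rfl)
    exacts [⟨rfl, rfl⟩, ⟨hp.map_sigma f, hp.map_theta_sigma h f⟩]

theorem ncard_dart_fiber (hp : Realizes θ σ φ G p) (h : IsGraphEmb θ σ φ) (d : G.Dart) :
    (hp.dart ⁻¹' {d}).ncard = 2 := by
  obtain ⟨f, htail, hhead⟩ := hp.2.2.2.2.1 d.fst d.snd d.adj
  have hd : d = hp.dart f := SimpleGraph.Dart.ext _ _ (Prod.ext htail.symm hhead.symm)
  have hfib : hp.dart ⁻¹' {d} = {f, σ f} := by
    ext g
    simp [hd, hp.dart_eq_iff_eq_or_eq h]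
  rw [hfib, Set.ncard_pair (h.2.1.apply_ne f).symm]

theorem finite [Finite V] (hp : Realizes θ σ φ G p) (h : IsGraphEmb θ σ φ) : Finite F := by
  have : Finite G.Dart := .of_injective _ SimpleGraph.Dart.toProd_injective
  refine Set.finite_univ_iff.1 (Set.Finite.of_finite_fibers hp.dart (Set.toFinite _) fun d _ ↦ ?_)
  exact (Set.finite_of_ncard_ne_zero (by rw [hp.ncard_dart_fiber h]; decide)).subset
    Set.inter_subset_right

theorem ncard_dart_preimage [Finite V] (hp : Realizes θ σ φ G p) (h : IsGraphEmb θ σ φ)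
    (D : Set G.Dart) : (hp.dart ⁻¹' D).ncard = 2 * D.ncard := by
  have := hp.finite h
  have : Finite G.Dart := .of_injective _ SimpleGraph.Dart.toProd_injective
  exact ncard_preimage_eq_mul hp.dart fun d _ ↦ hp.ncard_dart_fiber h d

theorem orbCount_edge [Finite V] [Fintype G.edgeSet] (hp : Realizes θ σ φ G p)
    (h : IsGraphEmb θ σ φ) : orbCount {θ, σ} = G.edgeFinset.card := by
  classical
  have := Fintype.ofFinite V
  have := hp.finite h
  have hedge : 4 * orbCount {θ, σ} = Nat.card F := mul_orbCount_eq_card h.2.2.2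
  have hdart : Nat.card F = 2 * Fintype.card G.Dart := by
    simpa [Set.ncard_univ] using hp.ncard_dart_preimage h Set.univ
  have hsum : Fintype.card G.Dart = 2 * G.edgeFinset.card := by
    convert G.dart_card_eq_twice_card_edges
  lia

theorem orbCount_vertex_le [Finite V] (hp : Realizes θ σ φ G p) :
    orbCount {σ, φ} ≤ Nat.card V := by
  refine Nat.card_le_card_of_injective (fun q : Orb {σ, φ} ↦ p q.out) fun q r hqr ↦ ?_
  have hout : toOrb {σ, φ} r.out = toOrb {σ, φ} q.out :=
    toOrb_eq_iff.2 (hp.mem_orbSet_vertex hqr)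
  simpa [toOrb] using hout.symm

theorem map_theta_phi_ne (hp : Realizes θ σ φ G p) (h : IsGraphEmb θ σ φ) {f : F}
    (hf : (G.neighborSet (p f)).Nontrivial) : p (θ (φ f)) ≠ p (θ f) := by
  intro hback
  have hσ : FPF σ := h.2.1
  have hφ : FPF φ := h.2.2.1
  have hφσ : φ f = σ f :=
    ((hp.dart_eq_iff_eq_or_eq h).1 (hp.dart_eq_iff.2 ⟨hp.map_phi f, hback⟩)).resolve_left
      (hφ.apply_ne f)
  have hσφ : φ (σ f) = f := by rw [← hφσ, hφ.involutive f]
  have hvertex : orbSet {σ, φ} f ⊆ {f, σ f} := by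
    refine orbSet_subset ?_ (by simp)
    rintro s (rfl | rfl) x
    · simp [hσ.involutive.eq_iff, hσ.involutive f, or_comm]
    · simp [hφ.involutive.eq_iff, hφσ, hσφ, or_comm]
  obtain ⟨v, hv, hne⟩ := hf.exists_ne (p (θ f))
  obtain ⟨g, hg, rfl⟩ := hp.2.2.2.2.1 (p f) v hv
  rcases hvertex (hp.mem_orbSet_vertex hg.symm) with rfl | rfl
  · exact hne rfl
  · exact hne (hp.map_theta_sigma h f)

end Realizes

section Faces

variable {F V : Type*}

/-- The face through a flag: its orbit under the edge involution `θ` and the corner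
involution `φ`. -/
abbrev face (θ φ : Equiv.Perm F) : F → Orb {θ, φ} :=
  toOrb {θ, φ}

theorem face_theta (θ φ : Equiv.Perm F) (f : F) : face θ φ (θ f) = face θ φ f :=
  toOrb_apply (by simp) f

theorem face_phi (θ φ : Equiv.Perm F) (f : F) : face θ φ (φ f) = face θ φ f :=
  toOrb_apply (by simp) f

/-- The flags along which the embedding leaves the vertex set `S`; an edge of the cut of `S`
contributes the two flags at its end in `S`. -/
def exits (θ : Equiv.Perm F) (p : F → V) (S : Set V) : Set F :=
  {f | p f ∈ S ∧ p (θ f) ∉ S}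

/-- The faces all of whose corners are at vertices of `S`. -/
def facesWithin (θ φ : Equiv.Perm F) (p : F → V) (S : Set V) : Set (Orb {θ, φ}) :=
  {q | ∀ f, face θ φ f = q → p f ∈ S}

end Faces

namespace Realizes

variable {F V : Type*} {θ σ φ : Equiv.Perm F} {G : SimpleGraph V} {p : F → V}

theorem exists_mem_exits (hp : Realizes θ σ φ G p) (h : IsGraphEmb θ σ φ) {S : Set V} {f g : F}
    (hfg : face θ φ g = face θ φ f) (hf : p f ∈ S) (hg : p g ∉ S) :
    ∃ e ∈ exits θ p S, face θ φ e = face θ φ f := by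
  by_contra! hno
  have hstep : ∀ x, face θ φ x = face θ φ f → p x ∈ S → p (θ x) ∈ S := fun x hx hxS ↦
    by_contra fun hxS' ↦ hno x ⟨hxS, hxS'⟩ hx
  have hinv : ∀ s ∈ ({θ, φ} : Set (Equiv.Perm F)), ∀ x,
      s x ∈ {x | face θ φ x = face θ φ f ∧ p x ∈ S} ↔
        x ∈ {x | face θ φ x = face θ φ f ∧ p x ∈ S} := by
    rintro s (rfl | rfl) x
    · refine ⟨fun ⟨hx, hxS⟩ ↦ ⟨by rwa [face_theta] at hx, ?_⟩,
        fun ⟨hx, hxS⟩ ↦ ⟨by rwa [face_theta], hstep x hx hxS⟩⟩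
      simpa only [h.1.involutive x] using hstep _ hx hxS
    · simp only [Set.mem_ofPred_eq, face_phi, hp.map_phi]
  exact hg (orbSet_subset hinv ⟨rfl, hf⟩ (toOrb_eq_iff.1 hfg)).2

theorem even_ncard_exits [Finite F] (hp : Realizes θ σ φ G p) (h : IsGraphEmb θ σ φ) (S : Set V)
    (q : Orb {θ, φ}) : Even {f ∈ exits θ p S | face θ φ f = q}.ncard := by
  -- `φ` pairs up the flags of `q` at `S`, and `θ` those among them that point back into `S`.
  have hall : Even {f | face θ φ f = q ∧ p f ∈ S}.ncard :=
    h.2.2.1.even_ncard fun f hf ↦ by simpa only [Set.mem_ofPred_eq, face_phi, hp.map_phi] using hf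
  have hinner : Even {f | face θ φ f = q ∧ p f ∈ S ∧ p (θ f) ∈ S}.ncard :=
    h.1.even_ncard fun f hf ↦ by
      simpa only [Set.mem_ofPred_eq, face_theta, h.1.involutive f, and_comm (a := p f ∈ S)] using hf
  have hsplit : {f | face θ φ f = q ∧ p f ∈ S} =
      {f ∈ exits θ p S | face θ φ f = q} ∪ {f | face θ φ f = q ∧ p f ∈ S ∧ p (θ f) ∈ S} := by
    ext f
    simp only [exits, Set.mem_ofPred_eq, Set.mem_union]
    tauto
  rw [hsplit, Set.ncard_union_eq
    (Set.disjoint_left.2 fun f hf hf' ↦ hf.1.2 hf'.2.2), Nat.even_add] at hall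
  exact hall.2 hinner

theorem six_le_ncard_face [Finite F] (hp : Realizes θ σ φ G p) (h : IsGraphEmb θ σ φ)
    (hG : ∀ v, (G.neighborSet v).Nontrivial) (q : Orb {θ, φ}) :
    6 ≤ {f | face θ φ f = q}.ncard := by
  obtain ⟨f, rfl⟩ := toOrb_surjective _ q
  set A := {g | face θ φ g = face θ φ f} with hA
  have hcorners : 2 < (p '' A).ncard := by
    have hnext : ∀ g, p g ≠ p (φ (θ g)) := fun g ↦ by
      rw [hp.map_phi]
      exact (hp.adj g).ne
    have hback : p f ≠ p (φ (θ (φ (θ f)))) := by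
      simpa only [hp.map_phi, h.1.involutive f] using (hp.map_theta_phi_ne h (hG (p (θ f)))).symm
    refine (Set.two_lt_ncard).2 ⟨p f, ⟨f, rfl, rfl⟩, p (φ (θ f)), ⟨_, ?_, rfl⟩,
      p (φ (θ (φ (θ f)))), ⟨_, ?_, rfl⟩, hnext f, hback, hnext _⟩ <;>
    simp only [hA, Set.mem_ofPred_eq, face_phi, face_theta]
  have hfiber : ∀ v ∈ p '' A, 2 ≤ {g ∈ A | p g = v}.ncard := by
    rintro _ ⟨g, hg, rfl⟩
    exact (Set.one_lt_ncard).2 ⟨g, ⟨hg, rfl⟩, φ g, ⟨(face_phi θ φ g).trans hg, hp.map_phi g⟩,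
      (h.2.2.1.apply_ne g).symm⟩
  have hle : 2 * (p '' A).ncard ≤ A.ncard := mul_ncard_le_ncard_of_fibers p hfiber
  lia

theorem three_mul_ncard_exits_le [Finite F] (hp : Realizes θ σ φ G p) (h : IsGraphEmb θ σ φ)
    (hG : ∀ v, (G.neighborSet v).Nontrivial) {S : Set V}
    (huniq : ∀ u ∈ S, ∀ v ∉ S, ∀ w ∉ S, G.Adj u v → G.Adj u w → v = w)
    (hindep : ∀ u ∈ S, ∀ u' ∈ S, ∀ v ∉ S, ∀ v' ∉ S, G.Adj u v → G.Adj u' v' → ¬G.Adj u u') :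
    3 * (exits θ p S).ncard ≤ {f | p f ∈ S ∧ face θ φ f ∉ facesWithin θ φ p S}.ncard := by
  -- Each exit `e` gives three flags at `S` on a face that leaves `S`: `e`, `φ e` and `θ (φ e)`.
  set E := exits θ p S
  have hhead : ∀ e ∈ E, p (θ (φ e)) ∈ S := fun e he ↦ by_contra fun hout ↦
    hp.map_theta_phi_ne h (hG _) <| huniq (p e) he.1 _ hout _ he.2
      (by simpa only [hp.map_phi] using hp.adj (φ e)) (hp.adj e)
  have hnotWithin : ∀ e ∈ E, face θ φ e ∉ facesWithin θ φ p S := fun e he hq ↦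
    he.2 (hq _ (face_theta θ φ e))
  have hdisj : Disjoint E (φ '' E) := by
    rw [Set.disjoint_left]
    rintro _ he' ⟨e, he, rfl⟩
    exact he'.2 (hhead e he)
  have hdisj' : Disjoint (E ∪ φ '' E) (θ '' (φ '' E)) := by
    rw [Set.disjoint_left]
    rintro _ hor ⟨_, ⟨e, he, rfl⟩, rfl⟩
    rcases hor with he' | ⟨e', he', heq⟩
    · exact he'.2 (by simpa only [h.1.involutive (φ e), hp.map_phi] using he.1)
    · refine hindep _ he.1 _ he'.1 _ he.2 _ he'.2 (hp.adj e) (hp.adj e') ?_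
      simpa only [← heq, hp.map_phi] using hp.adj (φ e)
  calc 3 * E.ncard = (E ∪ φ '' E ∪ θ '' (φ '' E)).ncard := by
        rw [Set.ncard_union_eq hdisj', Set.ncard_union_eq hdisj,
          Set.ncard_image_of_injective _ θ.injective, Set.ncard_image_of_injective _ φ.injective]
        ring
    _ ≤ _ := Set.ncard_le_ncard <| by
        rintro f ((hf | ⟨e, he, rfl⟩) | ⟨_, ⟨e, he, rfl⟩, rfl⟩)
        · exact ⟨hf.1, hnotWithin f hf⟩
        · exact ⟨by simpa only [hp.map_phi] using he.1, by
            simpa only [face_phi] using hnotWithin e he⟩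
        · exact ⟨hhead e he, by simpa only [face_theta, face_phi] using hnotWithin e he⟩

theorem six_mul_ncard_facesWithin_le [Finite F] (hp : Realizes θ σ φ G p)
    (h : IsGraphEmb θ σ φ) (hG : ∀ v, (G.neighborSet v).Nontrivial) (S : Set V) :
    6 * (facesWithin θ φ p S).ncard ≤
      {f | p f ∈ S ∧ face θ φ f ∈ facesWithin θ φ p S}.ncard := by
  refine mul_ncard_le_ncard_of_fibers (face θ φ) fun q hq ↦ (hp.six_le_ncard_face h hG q).trans ?_
  refine Set.ncard_le_ncard ?_
  rintro f rfl
  exact ⟨⟨hq f rfl, hq⟩, rfl⟩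

theorem six_mul_ncard_facesWithin_add_le [Finite F] (hp : Realizes θ σ φ G p)
    (h : IsGraphEmb θ σ φ) (hG : ∀ v, (G.neighborSet v).Nontrivial) {S : Set V}
    (huniq : ∀ u ∈ S, ∀ v ∉ S, ∀ w ∉ S, G.Adj u v → G.Adj u w → v = w)
    (hindep : ∀ u ∈ S, ∀ u' ∈ S, ∀ v ∉ S, ∀ v' ∉ S, G.Adj u v → G.Adj u' v' → ¬G.Adj u u') :
    6 * (facesWithin θ φ p S).ncard + 3 * (exits θ p S).ncard ≤ (p ⁻¹' S).ncard := by
  have hsplit : (p ⁻¹' S).ncard = {f | p f ∈ S ∧ face θ φ f ∈ facesWithin θ φ p S}.ncard +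
      {f | p f ∈ S ∧ face θ φ f ∉ facesWithin θ φ p S}.ncard :=
    (Set.ncard_inter_add_ncard_sdiff_eq_ncard (p ⁻¹' S)
      (face θ φ ⁻¹' facesWithin θ φ p S)).symm
  rw [hsplit]
  exact add_le_add (hp.six_mul_ncard_facesWithin_le h hG S)
    (hp.three_mul_ncard_exits_le h hG huniq hindep)

theorem four_mul_ncard_faces_exits_le [Finite F] {ι : Type*} (hp : Realizes θ σ φ G p)
    (h : IsGraphEmb θ σ φ) (hG : ∀ v, (G.neighborSet v).Nontrivial) {S : ι → Set V}
    (hS : Pairwise fun i j ↦ Disjoint (S i) (S j))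
    (hlink : ∀ i, ∀ u ∈ S i, ∀ v ∉ S i, G.Adj u v → ∀ w ≠ u, G.Adj v w →
      ∃ j ≠ i, w ∈ S j ∧ v ∉ S j) :
    4 * (face θ φ '' ⋃ i, exits θ p (S i)).ncard ≤ (⋃ i, exits θ p (S i)).ncard := by
  -- Past the outer vertex a face enters a second set, and it exits either set an even number of
  -- times.
  refine mul_ncard_le_ncard_of_fibers (face θ φ) ?_
  rintro _ ⟨f, hf, rfl⟩
  obtain ⟨i, hi⟩ := Set.mem_iUnion.1 hf
  set E : ι → Set F := fun j ↦ {e ∈ exits θ p (S j) | face θ φ e = face θ φ f}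
  obtain ⟨j, hji, g, hg⟩ : ∃ j ≠ i, (E j).Nonempty := by
    have hne : p (θ (φ (θ f))) ≠ p f := by
      simpa only [h.1.involutive f] using hp.map_theta_phi_ne h (hG (p (θ f)))
    obtain ⟨j, hji, hw, hv⟩ := hlink i _ hi.1 _ hi.2 (hp.adj f) _ hne
      (by simpa only [hp.map_phi] using hp.adj (φ (θ f)))
    refine ⟨j, hji, θ (φ (θ f)), ⟨hw, ?_⟩, by simp only [face_theta, face_phi]⟩
    rwa [h.1.involutive, hp.map_phi]
  have htwo : ∀ k, (E k).Nonempty → 2 ≤ (E k).ncard := fun k hk ↦ by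
    have hpos : 0 < (E k).ncard := (Set.ncard_pos).2 hk
    obtain ⟨m, hm⟩ := hp.even_ncard_exits h (S k) (face θ φ f)
    lia
  have hdisj : Disjoint (E i) (E j) := Set.disjoint_left.2 fun e he he' ↦
    Set.disjoint_left.1 (hS hji) he'.1.1 he.1.1
  calc 4 ≤ (E i).ncard + (E j).ncard := add_le_add (htwo i ⟨f, hi, rfl⟩) (htwo j ⟨g, hg⟩)
    _ = (E i ∪ E j).ncard := (Set.ncard_union_eq hdisj).symm
    _ ≤ _ := Set.ncard_le_ncard <| by
      rintro e (he | he) <;> exact ⟨Set.mem_iUnion.2 ⟨_, he.1⟩, he.2⟩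

end Realizes

namespace Bgraph

variable {ℓ : ℕ}

/-- The vertex of `K₅⁻` to which the apex `inr z` is attached. -/
def pole (z : Fin 2) : Fin 5 :=
  z.castLE (by decide)

/-- The vertex set of the `i`-th copy of `K₅⁻`. -/
def copy (ℓ : ℕ) (i : Fin ℓ) : Set ((Fin ℓ × Fin 5) ⊕ Fin 2) :=
  Set.range fun x ↦ .inl (i, x)

theorem adj_inl_inl {i j : Fin ℓ} {x y : Fin 5} :
    (Bgraph ℓ).Adj (.inl (i, x)) (.inl (j, y)) ↔ i = j ∧ x ≠ y ∧ s(x, y) ≠ s(0, 1) := by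
  simp only [Bgraph, SimpleGraph.fromRel_adj]
  grind

theorem adj_inl_inr {i : Fin ℓ} {x : Fin 5} {z : Fin 2} :
    (Bgraph ℓ).Adj (.inl (i, x)) (.inr z) ↔ x = pole z := by
  have hpole : ∀ (x : Fin 5) (z : Fin 2), (z = 0 ∧ x = 0) ∨ (z = 1 ∧ x = 1) ↔ x = pole z := by
    decide
  simp [Bgraph, SimpleGraph.fromRel_adj, hpole]

theorem adj_inr_inl {i : Fin ℓ} {x : Fin 5} {z : Fin 2} :
    (Bgraph ℓ).Adj (.inr z) (.inl (i, x)) ↔ x = pole z :=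
  (SimpleGraph.adj_comm _ _ _).trans adj_inl_inr

theorem not_adj_inr_inr (z z' : Fin 2) : ¬(Bgraph ℓ).Adj (.inr z) (.inr z') := by
  simp [Bgraph, SimpleGraph.fromRel_adj]

theorem degree_inl [DecidableRel (Bgraph ℓ).Adj] (i : Fin ℓ) (x : Fin 5) :
    (Bgraph ℓ).degree (.inl (i, x)) = 4 := by
  have hK : ∀ x : Fin 5, (∑ y, if x ≠ y ∧ s(x, y) ≠ s(0, 1) then 1 else 0) +
      (∑ z, if x = pole z then 1 else 0) = 4 := by decide
  rw [← hK x, ← SimpleGraph.card_neighborFinset_eq_degree, SimpleGraph.neighborFinset_eq_filter,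
    Finset.card_filter, Fintype.sum_sum_type, Fintype.sum_prod_type,
    Fintype.sum_eq_single i fun j hj ↦ Finset.sum_eq_zero fun y _ ↦ by
      simp [adj_inl_inl, hj.symm]]
  simp only [adj_inl_inl, adj_inl_inr, true_and]

theorem degree_inr [DecidableRel (Bgraph ℓ).Adj] (z : Fin 2) :
    (Bgraph ℓ).degree (.inr z) = ℓ := by
  rw [← SimpleGraph.card_neighborFinset_eq_degree, SimpleGraph.neighborFinset_eq_filter,
    Finset.card_filter, Fintype.sum_sum_type, Fintype.sum_prod_type]
  simp [adj_inr_inl, not_adj_inr_inr]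

theorem nontrivial_neighborSet (hl : 1 < ℓ) (v) : ((Bgraph ℓ).neighborSet v).Nontrivial := by
  classical
  suffices h : 1 < (Bgraph ℓ).degree v by
    rwa [← SimpleGraph.card_neighborFinset_eq_degree, Finset.one_lt_card_iff_nontrivial,
      Finset.Nontrivial, SimpleGraph.coe_neighborFinset] at h
  rcases v with ⟨i, x⟩ | z
  · rw [degree_inl]
    decide
  · rwa [degree_inr]

theorem card_edgeFinset [Fintype (Bgraph ℓ).edgeSet] : (Bgraph ℓ).edgeFinset.card = 11 * ℓ := by
  classical
  have hsum : ∑ v, (Bgraph ℓ).degree v = 2 * (Bgraph ℓ).edgeFinset.card := by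
    convert (Bgraph ℓ).sum_degrees_eq_twice_card_edges
  rw [Fintype.sum_sum_type, Fintype.sum_prod_type] at hsum
  simp only [degree_inl, degree_inr, Finset.sum_const, Finset.card_univ, Fintype.card_fin,
    smul_eq_mul] at hsum
  lia

theorem ncard_copy (i : Fin ℓ) : (copy ℓ i).ncard = 5 := by
  have hinj : Function.Injective fun x : Fin 5 ↦ (.inl (i, x) : (Fin ℓ × Fin 5) ⊕ Fin 2) :=
    Sum.inl_injective.comp (Prod.mk_right_injective i)
  simpa [copy] using Set.ncard_range_of_injective hinj

theorem pairwise_disjoint_copy : Pairwise fun i j : Fin ℓ ↦ Disjoint (copy ℓ i) (copy ℓ j) := by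
  intro i j hij
  rw [Set.disjoint_left]
  rintro _ ⟨x, rfl⟩ ⟨y, hy⟩
  simp_all

theorem exists_pole_of_adj {i : Fin ℓ} {u v} (hu : u ∈ copy ℓ i) (hv : v ∉ copy ℓ i)
    (huv : (Bgraph ℓ).Adj u v) : ∃ z, u = .inl (i, pole z) ∧ v = .inr z := by
  obtain ⟨x, rfl⟩ := hu
  rcases v with ⟨j, y⟩ | z
  · rw [adj_inl_inl] at huv
    exact absurd ⟨y, by rw [huv.1]⟩ hv
  · exact ⟨z, by rw [adj_inl_inr.1 huv], rfl⟩

theorem not_adj_pole_pole (i : Fin ℓ) (z z' : Fin 2) :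
    ¬(Bgraph ℓ).Adj (.inl (i, pole z)) (.inl (i, pole z')) := by
  have hpole : ∀ z z', ¬(pole z ≠ pole z' ∧ s(pole z, pole z') ≠ s(0, 1)) := by decide
  exact fun h ↦ hpole z z' (adj_inl_inl.1 h).2

theorem ncard_darts_copy (i : Fin ℓ) :
    {d : (Bgraph ℓ).Dart | d.fst ∈ copy ℓ i}.ncard = 20 := by
  classical
  have hfib : ∀ v ∈ copy ℓ i, {d : (Bgraph ℓ).Dart | d.fst = v}.ncard = 4 := by
    rintro _ ⟨x, rfl⟩
    rw [← degree_inl i x, ← SimpleGraph.dart_fst_fiber_card_eq_degree, ← Set.ncard_coe_finset]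
    simp
  exact (ncard_preimage_eq_mul (fun d : (Bgraph ℓ).Dart ↦ d.fst) hfib).trans (by rw [ncard_copy])

theorem ncard_exit_darts_copy (i : Fin ℓ) :
    {d : (Bgraph ℓ).Dart | d.fst ∈ copy ℓ i ∧ d.snd ∉ copy ℓ i}.ncard = 2 := by
  have hrange : {d : (Bgraph ℓ).Dart | d.fst ∈ copy ℓ i ∧ d.snd ∉ copy ℓ i} =
      Set.range fun z : Fin 2 ↦ ⟨(.inl (i, pole z), .inr z), adj_inl_inr.2 rfl⟩ := by
    ext d
    constructor
    · rintro ⟨hu, hv⟩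
      obtain ⟨z, hu, hv⟩ := exists_pole_of_adj hu hv d.adj
      exact ⟨z, SimpleGraph.Dart.ext _ _ (Prod.ext hu.symm hv.symm)⟩
    · rintro ⟨z, rfl⟩
      simp [copy]
  rw [hrange, Set.ncard_range_of_injective fun z z' h ↦ by simpa using (congrArg (·.snd) h),
    Nat.card_fin]

variable {F : Type*} {θ σ φ : Equiv.Perm F} {p : F → (Fin ℓ × Fin 5) ⊕ Fin 2}

theorem ncard_preimage_copy (hp : Realizes θ σ φ (Bgraph ℓ) p) (h : IsGraphEmb θ σ φ)
    (i : Fin ℓ) : (p ⁻¹' copy ℓ i).ncard = 40 :=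
  (hp.ncard_dart_preimage h {d | d.fst ∈ copy ℓ i}).trans (by rw [ncard_darts_copy])

theorem ncard_exits_copy (hp : Realizes θ σ φ (Bgraph ℓ) p) (h : IsGraphEmb θ σ φ)
    (i : Fin ℓ) : (exits θ p (copy ℓ i)).ncard = 4 :=
  (hp.ncard_dart_preimage h {d | d.fst ∈ copy ℓ i ∧ d.snd ∉ copy ℓ i}).trans
    (by rw [ncard_exit_darts_copy])

theorem ncard_facesWithin_copy_le (hp : Realizes θ σ φ (Bgraph ℓ) p) (h : IsGraphEmb θ σ φ)
    (hl : 1 < ℓ) (i : Fin ℓ) : (facesWithin θ φ p (copy ℓ i)).ncard ≤ 4 := by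
  have := hp.finite h
  have hcount := hp.six_mul_ncard_facesWithin_add_le h (nontrivial_neighborSet hl)
    (S := copy ℓ i) ?_ ?_
  · rw [ncard_exits_copy hp h, ncard_preimage_copy hp h] at hcount
    lia
  · intro u hu v hv w hw huv huw
    obtain ⟨z, rfl, rfl⟩ := exists_pole_of_adj hu hv huv
    obtain ⟨z', hz, rfl⟩ := exists_pole_of_adj hu hw huw
    simpa [pole] using hz
  · intro u hu u' hu' v hv v' hv' huv huv'
    obtain ⟨z, rfl, -⟩ := exists_pole_of_adj hu hv huv
    obtain ⟨z', rfl, -⟩ := exists_pole_of_adj hu' hv' huv'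
    exact not_adj_pole_pole i z z'

theorem ncard_faces_exits_le (hp : Realizes θ σ φ (Bgraph ℓ) p) (h : IsGraphEmb θ σ φ)
    (hl : 1 < ℓ) : (face θ φ '' ⋃ i, exits θ p (copy ℓ i)).ncard ≤ ℓ := by
  have := hp.finite h
  have hcount := hp.four_mul_ncard_faces_exits_le h (nontrivial_neighborSet hl)
    pairwise_disjoint_copy ?_
  · have hexits : (⋃ i, exits θ p (copy ℓ i)).ncard ≤ 4 * ℓ :=
      (Set.ncard_iUnion_le_of_fintype _).trans (by simp [ncard_exits_copy hp h, mul_comm])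
    lia
  · intro i u hu v hv huv w hwu hvw
    obtain ⟨z, rfl, rfl⟩ := exists_pole_of_adj hu hv huv
    rcases w with ⟨j, y⟩ | z'
    · refine ⟨j, ?_, ⟨y, rfl⟩, by simp [copy]⟩
      rintro rfl
      exact hwu (by rw [adj_inr_inl.1 hvw])
    · exact absurd hvw (not_adj_inr_inr z z')

theorem mem_faces_exits_or_exists_mem_facesWithin (hp : Realizes θ σ φ (Bgraph ℓ) p)
    (h : IsGraphEmb θ σ φ) (q : Orb {θ, φ}) :
    q ∈ face θ φ '' (⋃ i, exits θ p (copy ℓ i)) ∨ ∃ i, q ∈ facesWithin θ φ p (copy ℓ i) := by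
  obtain ⟨f, i, hf, rfl⟩ : ∃ f i, p f ∈ copy ℓ i ∧ face θ φ f = q := by
    obtain ⟨f, rfl⟩ := toOrb_surjective _ q
    have hadj := hp.adj f
    rcases hf : p f with ⟨i, x⟩ | z
    · exact ⟨f, i, ⟨x, hf.symm⟩, rfl⟩
    rcases hf' : p (θ f) with ⟨i, x⟩ | z'
    · exact ⟨θ f, i, ⟨x, hf'.symm⟩, face_theta θ φ f⟩
    · rw [hf, hf'] at hadj
      exact absurd hadj (not_adj_inr_inr z z')
  by_contra! hq
  obtain ⟨g, hgf, hg⟩ : ∃ g, face θ φ g = face θ φ f ∧ p g ∉ copy ℓ i := by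
    simpa [facesWithin] using hq.2 i
  obtain ⟨e, he, hef⟩ := hp.exists_mem_exits h hgf hf hg
  exact hq.1 ⟨e, Set.mem_iUnion.2 ⟨i, he⟩, hef⟩

theorem orbCount_face_le (hp : Realizes θ σ φ (Bgraph ℓ) p) (h : IsGraphEmb θ σ φ)
    (hl : 1 < ℓ) : orbCount {θ, φ} ≤ 5 * ℓ := by
  have := hp.finite h
  have hwithin : (⋃ i, facesWithin θ φ p (copy ℓ i)).ncard ≤ 4 * ℓ :=
    calc _ ≤ ∑ i, (facesWithin θ φ p (copy ℓ i)).ncard := Set.ncard_iUnion_le_of_fintype _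
      _ ≤ ∑ _ : Fin ℓ, 4 := Finset.sum_le_sum fun i _ ↦ ncard_facesWithin_copy_le hp h hl i
      _ = 4 * ℓ := by simp [mul_comm]
  calc orbCount {θ, φ} = (Set.univ : Set (Orb {θ, φ})).ncard := (Set.ncard_univ _).symm
    _ ≤ (face θ φ '' (⋃ i, exits θ p (copy ℓ i)) ∪ ⋃ i, facesWithin θ φ p (copy ℓ i)).ncard :=
        Set.ncard_le_ncard fun q _ ↦ by
          simpa only [Set.mem_union, Set.mem_iUnion] using
            mem_faces_exits_or_exists_mem_facesWithin hp h q
    _ ≤ ℓ + 4 * ℓ :=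
        (Set.ncard_union_le _ _).trans (add_le_add (ncard_faces_exits_le hp h hl) hwithin)
    _ = 5 * ℓ := by ring

end Bgraph

theorem stmt14_general (ℓ : ℕ) (hl : 1 < ℓ) {Fl : Type*}
    (θ σ' φ' : Equiv.Perm Fl) (h : IsGraphEmb θ σ' φ')
    (p : Fl → (Fin ℓ × Fin 5) ⊕ Fin 2) (hp : Realizes θ σ' φ' (Bgraph ℓ) p) :
    (ℓ : ℤ) ≤ genus θ σ' φ' := by
  classical
  have := hp.finite h
  obtain ⟨f, -⟩ := hp.2.2.2.2.1 (.inr 0) (.inl (⟨0, by lia⟩, 0)) (Bgraph.adj_inr_inl.2 rfl)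
  have : Nonempty Fl := ⟨f⟩
  have hedges : orbCount {θ, σ'} = 11 * ℓ := (hp.orbCount_edge h).trans Bgraph.card_edgeFinset
  have hvertices : orbCount {σ', φ'} ≤ 5 * ℓ + 2 := by
    simpa [mul_comm] using hp.orbCount_vertex_le
  have hfaces : orbCount {θ, φ'} ≤ 5 * ℓ := Bgraph.orbCount_face_le hp h hl
  have hcomponents : 0 < orbCount {θ, σ', φ'} := orbCount_pos _
  rw [genus]
  lia

theorem stmt14 (ℓ : ℕ) (hl : 1 < ℓ) {Fl : Type*} [Fintype Fl]
    (θ σ' φ' : Equiv.Perm Fl) (h : IsGraphEmb θ σ' φ')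
    (p : Fl → (Fin ℓ × Fin 5) ⊕ Fin 2) (hp : Realizes θ σ' φ' (Bgraph ℓ) p) :
    (ℓ : ℤ) ≤ 2 * genus θ σ' φ' := by
  have := stmt14_general ℓ hl θ σ' φ' h p hp
  lia
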